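/- Let G be a gonality-tight graph with a vertex v such that the divisor D = v + Σ_{w∈V(G)} w realises the second gonality of G. Then G is a quasi-banana graph, and v is the vertex u_{0,1} in the quasi-banana structure (i.e. there is an isomorphism of G with some QB_m(N) carrying v to u_{0,1}). -/

import Mathlib

open Finset

variable {V : Type*} [Fintype V] [DecidableEq V]

/-- A finite loopless multigraph on vertex type `V`, given by symmetric edge multiplicities. -/
structure Multigraph (V : Type*) [Fintype V] [DecidableEq V] where
  mult : V → V → ℕ
  symm : ∀ u v, mult u v = mult v u
  loopless : ∀ v, mult v v = 0

namespace Multigraph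

def Adj (G : Multigraph V) (u v : V) : Prop := 0 < G.mult u v

/-- A graph is connected. -/
def Connected (G : Multigraph V) : Prop :=
  Nonempty V ∧ ∀ u v : V, Relation.ReflTransGen G.Adj u v

/-- Valence of a vertex. -/
def valence (G : Multigraph V) (v : V) : ℕ := ∑ u, G.mult v u

/-- The Laplacian applied to an integer-valued function on the vertices. -/
def laplacian (G : Multigraph V) (f : V → ℤ) : V → ℤ :=
  fun w => ∑ u, (G.mult w u : ℤ) * (f w - f u)

/-- Degree of a divisor. -/
def degree (D : V → ℤ) : ℤ := ∑ v, D v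

/-- A divisor is effective if all coefficients are nonnegative. -/
def Effective (D : V → ℤ) : Prop := ∀ v, 0 ≤ D v

/-- Linear equivalence of divisors: they differ by a sequence of chip-firing moves,
equivalently by a Laplacian of an integer function. -/
def LinEquiv (G : Multigraph V) (D D' : V → ℤ) : Prop :=
  ∃ f : V → ℤ, D' = D - G.laplacian f

/-- A divisor is winnable if it is linearly equivalent to an effective divisor. -/
def Winnable (G : Multigraph V) (D : V → ℤ) : Prop :=
  ∃ E : V → ℤ, Effective E ∧ G.LinEquiv D E

/-- The Baker–Norine rank of a divisor: the largest `r` such that `D - E` is winnable for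
every effective divisor `E` of degree `r` (the defining set contains all negative integers,
and its supremum is `-1` precisely when `D` itself is not winnable). -/
noncomputable def rank (G : Multigraph V) (D : V → ℤ) : ℤ :=
  sSup {r : ℤ | ∀ E : V → ℤ, Effective E → degree E = r → G.Winnable (fun w => D w - E w)}

/-- The `k`-th gonality of a graph: the smallest degree of a divisor of rank `k`. -/
noncomputable def gonality (G : Multigraph V) (k : ℤ) : ℤ :=
  sInf {d : ℤ | ∃ D : V → ℤ, G.rank D = k ∧ degree D = d}

/-- A graph is gonality-tight if its second gonality exceeds its first by exactly 1. -/
def GonalityTight (G : Multigraph V) : Prop :=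
  G.gonality 2 = G.gonality 1 + 1

/-- A divisor realises the `k`-th gonality if it has rank `k` and degree `gon_k(G)`. -/
def Realises (G : Multigraph V) (k : ℤ) (D : V → ℤ) : Prop :=
  G.rank D = k ∧ degree D = G.gonality k

/-- A divisor is `v`-reduced: nonnegative away from `v`, and set-firing any nonempty set of
vertices not containing `v` creates a negative coefficient inside the set. -/
def Reduced (G : Multigraph V) (v : V) (D : V → ℤ) : Prop :=
  (∀ w, w ≠ v → 0 ≤ D w) ∧
    ∀ U : Finset V, U.Nonempty → v ∉ U →
      ∃ w ∈ U, D w - ∑ u ∈ Uᶜ, (G.mult w u : ℤ) < 0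

/-- The genus (first Betti number) of a graph: `|E| - |V| + 1`. -/
def genus (G : Multigraph V) : ℤ :=
  ((∑ u, ∑ v, G.mult u v : ℕ) : ℤ) / 2 - Fintype.card V + 1

/-- The canonical divisor of a graph. -/
def canonical (G : Multigraph V) : V → ℤ :=
  fun w => (G.valence w : ℤ) - 2

/-- The subgraph induced on a set `S` of vertices (with all edges among `S`). -/
def induce (G : Multigraph V) (S : Finset V) : Multigraph {x // x ∈ S} where
  mult a b := G.mult a b
  symm a b := G.symm a b
  loopless a := G.loopless a

/-- `G.SeparatedBy u w v` means every path from `w` to `v` passes through `u`. -/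
def SeparatedBy (G : Multigraph V) (u w v : V) : Prop :=
  ¬ Relation.ReflTransGen (fun x y => G.Adj x y ∧ x ≠ u ∧ y ≠ u) w v

end Multigraph

/-- Size of the `i`-th level of a quasi-banana graph: level `0` has a single vertex. -/
def qbSize (q : ℕ → ℕ) (i : ℕ) : ℕ := if i = 0 then 1 else q i

/-- `ℓ` is a quasi-banana labelling of `G` exhibiting `G ≅ QB_m(q_1, …, q_m)`:
`ℓ` is a bijection onto the pairs `(i, j)` with `i ≤ m`, `1 ≤ j ≤ qbSize q i`
(vertex `u_{i,j}` is the vertex labelled `(i,j)`), and the edge multiplicities are: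
one edge between distinct vertices of the same level, `(∑_{k=1}^{i} q_k) + 2` edges
between `u_{i,1}` and each `u_{i+1,j}`, and no other edges. -/
def Multigraph.IsQBLabelling (G : Multigraph V) (m : ℕ) (q : ℕ → ℕ) (ℓ : V → ℕ × ℕ) : Prop :=
  (∀ i, 1 ≤ i → i ≤ m → 0 < q i) ∧
  Function.Injective ℓ ∧
  (∀ v : V, (ℓ v).1 ≤ m ∧ 1 ≤ (ℓ v).2 ∧ (ℓ v).2 ≤ qbSize q (ℓ v).1) ∧
  (∀ i j : ℕ, i ≤ m → 1 ≤ j → j ≤ qbSize q i → ∃ v, ℓ v = (i, j)) ∧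
  (∀ v w : V, v ≠ w → G.mult v w =
    if (ℓ v).1 = (ℓ w).1 then 1
    else if (ℓ v).1 + 1 = (ℓ w).1 ∧ (ℓ v).2 = 1 then (∑ i ∈ Finset.Icc 1 (ℓ v).1, q i) + 2
    else if (ℓ w).1 + 1 = (ℓ v).1 ∧ (ℓ w).2 = 1 then (∑ i ∈ Finset.Icc 1 (ℓ w).1, q i) + 2
    else 0)

/-- A graph is a quasi-banana graph if it is isomorphic to some `QB_m(N)`. -/
def Multigraph.IsQuasiBanana (G : Multigraph V) : Prop :=
  ∃ (m : ℕ) (q : ℕ → ℕ) (ℓ : V → ℕ × ℕ), G.IsQBLabelling m q ℓ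

/-- The graph obtained from `G'` by attaching a complete graph `K_n`: `n` new vertices
pairwise joined by exactly one edge, each joined to `v` by exactly `k+1` edges. -/
def attachComplete (G' : Multigraph V) (v : V) (k n : ℕ) : Multigraph (V ⊕ Fin n) where
  mult x y :=
    match x, y with
    | Sum.inl a, Sum.inl b => G'.mult a b
    | Sum.inl a, Sum.inr _ => if a = v then k + 1 else 0
    | Sum.inr _, Sum.inl b => if b = v then k + 1 else 0
    | Sum.inr i, Sum.inr j => if i = j then 0 else 1
  symm := by
    rintro (a | i) (b | j)
    · exact G'.symm a b
    · rfl
    · rfl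
    · by_cases h : i = j
      · simp [h]
      · simp [h, Ne.symm h]
  loopless := by
    rintro (a | i)
    · exact G'.loopless a
    · simp

/-!
Put `D_v = v + ∑ w`. Tightness says that taking any two chips from `D_v` leaves a divisor of rank
less than one, so for `y ≠ z` the divisors `D_v - 2y - z` and `D_v - 2z - y` are not both winnable;
in particular `D_v` is `v`-reduced. Let `D_u` carry one chip on each vertex farther from `v` than
`u` and all its other chips on `u`. If `D_u ∼ D_v` and `w` is a neighbour of `u` farther from `v`,
then a legal firing set containing `u` but not `w` exists since two chips can be moved to `w`, and
by the exclusion principle above it has no boundary vertex besides `w`. Hence it contains the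
component of `u` in `G - w`, which can therefore be fired legally. Legality bounds the
multiplicities of the edges at `w` from above, and the exclusion principle turns the bounds into
the multiplicities of a quasi-banana graph. Firing the component transforms `D_u` into `D_w`, so
the argument proceeds by induction on the distance from `v`.
-/

namespace Multigraph

section Divisor

variable {ι : Type*}

lemma degree_add [Fintype ι] (D E : ι → ℤ) : degree (D + E) = degree D + degree E :=
  sum_add_distrib

lemma degree_sub [Fintype ι] (D E : ι → ℤ) : degree (D - E) = degree D - degree E :=
  sum_sub_distrib ..

lemma degree_single [Fintype ι] [DecidableEq ι] (x : ι) (n : ℤ) : degree (Pi.single x n) = n :=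
  Fintype.sum_pi_single' x n

lemma Effective.degree_nonneg [Fintype ι] {D : ι → ℤ} (hD : Effective D) : 0 ≤ degree D :=
  sum_nonneg fun w _ => hD w

lemma effective_single [DecidableEq ι] (x : ι) {n : ℤ} (hn : 0 ≤ n) : Effective (Pi.single x n) :=
  show (0 : ι → ℤ) ≤ Pi.single x n from Pi.single_nonneg.2 hn

lemma eq_of_degree_eq_of_forall_ne [Fintype ι] {D E : ι → ℤ} {w : ι}
    (hdeg : degree D = degree E) (h : ∀ x, x ≠ w → D x = E x) : D = E := by
  classical
  have hsingle : D - E = Pi.single w (D w - E w) := by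
    funext x
    rcases eq_or_ne x w with rfl | hx
    · simp
    · simp [hx, h x hx]
  have hw : D w - E w = 0 := by
    rw [← degree_single w (D w - E w), ← hsingle, degree_sub, hdeg, sub_self]
  rwa [hw, Pi.single_zero, sub_eq_zero] at hsingle

lemma Effective.exists_eq_single [Fintype ι] [DecidableEq ι] {D : ι → ℤ} (hD : Effective D)
    (hdeg : degree D = 1) : ∃ x, D = Pi.single x 1 := by
  obtain ⟨x, hx⟩ : ∃ x, 1 ≤ D x := by
    by_contra! hlt
    have : degree D ≤ 0 := sum_nonpos fun w _ => Int.lt_add_one_iff.1 (hlt w)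
    lia
  have hrest : Effective (D - Pi.single x 1) := by
    intro w
    rcases eq_or_ne w x with rfl | hw
    · simpa using hx
    · simpa [hw] using hD w
  have hzero : degree (D - Pi.single x 1) = 0 := by rw [degree_sub, degree_single, hdeg, sub_self]
  exact ⟨x, sub_eq_zero.1 ((Fintype.sum_eq_zero_iff_of_nonneg hrest).1 hzero)⟩

lemma Effective.single_add_single_le [DecidableEq ι] {D : ι → ℤ} (hD : Effective D) {y z : ι}
    (hyz : y ≠ z) {a b : ℤ} (hy : a ≤ D y) (hz : b ≤ D z) : Pi.single y a + Pi.single z b ≤ D := by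
  intro x
  rcases eq_or_ne x y with rfl | hxy
  · simpa [hyz] using hy
  rcases eq_or_ne x z with rfl | hxz
  · simpa [hxy] using hz
  · simpa [hxy, hxz] using hD x

end Divisor

section Laplacian

lemma laplacian_zero (G : Multigraph V) : G.laplacian 0 = 0 := by
  funext w
  simp [laplacian]

lemma laplacian_add (G : Multigraph V) (f g : V → ℤ) :
    G.laplacian (f + g) = G.laplacian f + G.laplacian g := by
  funext w
  simp only [laplacian, Pi.add_apply, ← sum_add_distrib]
  exact sum_congr rfl fun u _ => by ring

lemma laplacian_neg (G : Multigraph V) (f : V → ℤ) :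
    G.laplacian (-f) = -G.laplacian f := by
  funext w
  simp only [laplacian, Pi.neg_apply, ← sum_neg_distrib]
  exact sum_congr rfl fun u _ => by ring

lemma degree_laplacian (G : Multigraph V) (f : V → ℤ) : degree (G.laplacian f) = 0 := by
  have hneg : degree (G.laplacian f) = -degree (G.laplacian f) := by
    simp only [degree, laplacian, ← sum_neg_distrib]
    rw [sum_comm]
    refine sum_congr rfl fun w _ => sum_congr rfl fun u _ => ?_
    rw [G.symm u w]
    ring
  lia

end Laplacian

section LinEquiv

variable {G : Multigraph V} {D D' E : V → ℤ}

lemma LinEquiv.refl (G : Multigraph V) (D : V → ℤ) : G.LinEquiv D D :=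
  ⟨0, by rw [laplacian_zero, sub_zero]⟩

lemma LinEquiv.symm (h : G.LinEquiv D E) : G.LinEquiv E D := by
  obtain ⟨f, rfl⟩ := h
  exact ⟨-f, by rw [laplacian_neg]; abel⟩

lemma LinEquiv.trans (h : G.LinEquiv D D') (h' : G.LinEquiv D' E) : G.LinEquiv D E := by
  obtain ⟨f, rfl⟩ := h
  obtain ⟨g, rfl⟩ := h'
  exact ⟨f + g, by rw [laplacian_add]; abel⟩

lemma LinEquiv.sub_right (h : G.LinEquiv D E) (C : V → ℤ) : G.LinEquiv (D - C) (E - C) := by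
  obtain ⟨f, rfl⟩ := h
  exact ⟨f, by abel⟩

lemma LinEquiv.degree_eq (h : G.LinEquiv D E) : degree E = degree D := by
  obtain ⟨f, rfl⟩ := h
  rw [degree_sub, degree_laplacian, sub_zero]

lemma LinEquiv.winnable (h : G.LinEquiv D E) (hE : G.Winnable E) : G.Winnable D := by
  obtain ⟨E', hE', h'⟩ := hE
  exact ⟨E', hE', h.trans h'⟩

lemma LinEquiv.winnable_sub_of_le (h : G.LinEquiv D E) {C : V → ℤ} (hC : C ≤ E) :
    G.Winnable (D - C) :=
  ⟨E - C, fun w => sub_nonneg.2 (hC w), h.sub_right C⟩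

lemma Winnable.degree_nonneg (h : G.Winnable D) : 0 ≤ degree D := by
  obtain ⟨E, hE, hDE⟩ := h
  exact hDE.degree_eq ▸ hE.degree_nonneg

end LinEquiv

section Rank

variable [Nonempty V] (G : Multigraph V) (D : V → ℤ)

lemma bddAbove_rank_set :
    BddAbove {r : ℤ | ∀ E : V → ℤ, Effective E → degree E = r →
      G.Winnable (fun w => D w - E w)} := by
  refine ⟨max (degree D) 0, fun r hr => ?_⟩
  by_contra! hlt
  obtain ⟨x⟩ := ‹Nonempty V›
  have hwin : G.Winnable (D - Pi.single x r) :=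
    hr _ (effective_single x ((le_max_right ..).trans hlt.le)) (degree_single x r)
  have hdeg := hwin.degree_nonneg
  rw [degree_sub, degree_single] at hdeg
  lia

lemma winnable_sub_of_degree_eq_rank {E : V → ℤ} (hE : Effective E)
    (hdeg : degree E = G.rank D) : G.Winnable (D - E) := by
  refine Int.csSup_mem ⟨-1, fun E hE hdeg => ?_⟩ (G.bddAbove_rank_set D) E hE hdeg
  have := hE.degree_nonneg
  lia

variable {G D}

lemma le_rank {r : ℤ} (h : ∀ E, Effective E → degree E = r → G.Winnable (D - E)) :
    r ≤ G.rank D :=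
  le_csSup (G.bddAbove_rank_set D) h

lemma rank_le_degree (h : 0 ≤ G.rank D) : G.rank D ≤ degree D := by
  obtain ⟨x⟩ := ‹Nonempty V›
  have hwin := G.winnable_sub_of_degree_eq_rank D (effective_single x h) (degree_single x _)
  have hdeg := hwin.degree_nonneg
  rw [degree_sub, degree_single] at hdeg
  lia

lemma rank_sub_one_le_rank_sub_single (x : V) :
    G.rank D - 1 ≤ G.rank (D - Pi.single x 1) := by
  refine le_rank fun E hE hdeg => ?_
  rw [sub_sub]
  refine G.winnable_sub_of_degree_eq_rank D
    (fun w => add_nonneg (effective_single x zero_le_one w) (hE w)) ?_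
  rw [degree_add, degree_single, hdeg]
  lia

lemma gonality_le_degree {k : ℤ} (hk : 0 ≤ k) (h : k ≤ G.rank D) : G.gonality k ≤ degree D := by
  induction hn : (degree D).toNat using Nat.strong_induction_on generalizing D with
  | _ n ih =>
    rcases h.eq_or_lt with heq | hlt
    · refine csInf_le ⟨0, ?_⟩ ⟨D, heq.symm, rfl⟩
      rintro _ ⟨E, rfl, rfl⟩
      exact hk.trans (rank_le_degree hk)
    · obtain ⟨x⟩ := ‹Nonempty V›
      have hrank := rank_sub_one_le_rank_sub_single (G := G) (D := D) x
      have hdeg : degree (D - Pi.single x 1) = degree D - 1 := by rw [degree_sub, degree_single]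
      have hpos := rank_le_degree (hk.trans h)
      have := ih _ (by lia) (show k ≤ G.rank (D - Pi.single x 1) by lia) rfl
      lia

lemma exists_not_winnable_sub_single (h : degree D < G.gonality 1) :
    ∃ x, ¬ G.Winnable (D - Pi.single x 1) := by
  by_contra! hwin
  refine h.not_ge (gonality_le_degree zero_le_one (le_rank fun E hE hdeg => ?_))
  obtain ⟨x, rfl⟩ := hE.exists_eq_single hdeg
  exact hwin x

end Rank

/-- The two facts about a divisor realising the second gonality of a gonality-tight graph that
the argument uses: two chips can be moved to any vertex, but removing any two chips leaves a
divisor of rank less than one. -/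
structure IsTightRankTwo (G : Multigraph V) (D : V → ℤ) : Prop where
  winnable_sub_single_two (w : V) : G.Winnable (D - Pi.single w 2)
  exists_not_winnable (y z : V) :
    ∃ x, ¬ G.Winnable (D - (Pi.single y 1 + Pi.single z 1 + Pi.single x 1))

section Tight

variable {G : Multigraph V} {D : V → ℤ}

lemma GonalityTight.isTightRankTwo [Nonempty V] (hG : G.GonalityTight) (hD : G.Realises 2 D) :
    G.IsTightRankTwo D where
  winnable_sub_single_two w :=
    G.winnable_sub_of_degree_eq_rank D (effective_single w zero_le_two)
      ((degree_single w 2).trans hD.1.symm)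
  exists_not_winnable y z := by
    have hdeg : degree (D - (Pi.single y 1 + Pi.single z 1)) < G.gonality 1 := by
      rw [degree_sub, degree_add, degree_single, degree_single, hD.2, hG]
      lia
    simpa only [sub_sub] using exists_not_winnable_sub_single hdeg

lemma IsTightRankTwo.not_winnable_swap (hD : G.IsTightRankTwo D) (hpos : ∀ x, 1 ≤ D x) {y z : V}
    (hyz : y ≠ z) (hy : G.Winnable (D - (Pi.single y 2 + Pi.single z 1))) :
    ¬ G.Winnable (D - (Pi.single z 2 + Pi.single y 1)) := by
  intro hz
  obtain ⟨x, hx⟩ := hD.exists_not_winnable y z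
  refine hx ?_
  rcases eq_or_ne x y with rfl | hxy
  · convert hy using 2
    rw [add_right_comm, ← Pi.single_add, one_add_one_eq_two]
  rcases eq_or_ne x z with rfl | hxz
  · convert hz using 2
    rw [add_assoc, ← Pi.single_add, one_add_one_eq_two, add_comm]
  refine (LinEquiv.refl G D).winnable_sub_of_le fun w => ?_
  have := hpos w
  simp only [Pi.add_apply, Pi.single_apply]
  grind

lemma IsTightRankTwo.not_winnable_sub_single_three (hD : G.IsTightRankTwo D)
    (hpos : ∀ x, 1 ≤ D x) {v : V} (hv : 2 ≤ D v) : ¬ G.Winnable (D - Pi.single v 3) := by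
  intro h
  obtain ⟨x, hx⟩ := hD.exists_not_winnable v v
  rw [← Pi.single_add, one_add_one_eq_two] at hx
  refine hx ?_
  rcases eq_or_ne x v with rfl | hxv
  · rwa [← Pi.single_add]
  · exact (LinEquiv.refl G D).winnable_sub_of_le
      (Effective.single_add_single_le (fun w => zero_le_one.trans (hpos w)) hxv.symm hv (hpos x))

end Tight

section Firing

variable (G : Multigraph V)

/-- The number of edges from `x` to the complement of `F`: what `x` loses when `F` is fired,
if `x ∈ F`. -/
def outdegree (F : Finset V) (x : V) : ℤ := ∑ u ∈ Fᶜ, (G.mult x u : ℤ)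

/-- The divisor obtained from `D` by firing every vertex of `F` once. -/
def fire (F : Finset V) (D : V → ℤ) : V → ℤ :=
  D - G.laplacian fun x => if x ∈ F then 1 else 0

/-- The set `F` can be fired from `D` without bringing any vertex of `F` into debt. -/
def Legal (F : Finset V) (D : V → ℤ) : Prop := ∀ x ∈ F, G.outdegree F x ≤ D x

variable {G} {F : Finset V} {D : V → ℤ} {x y : V}

lemma linEquiv_fire : G.LinEquiv D (G.fire F D) :=
  ⟨_, rfl⟩

lemma fire_apply_of_mem (hx : x ∈ F) : G.fire F D x = D x - G.outdegree F x := by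
  simp only [fire, laplacian, outdegree, Pi.sub_apply, if_pos hx, ← Fintype.sum_ite_mem Fᶜ]
  congr 1
  refine sum_congr rfl fun u _ => ?_
  by_cases hu : u ∈ F <;> simp [hu]

lemma fire_apply_of_notMem (hx : x ∉ F) :
    G.fire F D x = D x + ∑ u ∈ F, (G.mult x u : ℤ) := by
  simp [fire, laplacian, hx]

lemma mult_le_outdegree (hy : y ∉ F) : (G.mult x y : ℤ) ≤ G.outdegree F x :=
  single_le_sum (f := fun u => (G.mult x u : ℤ)) (fun _ _ => by positivity) (mem_compl.2 hy)

lemma le_fire_apply_of_notMem (hx : x ∉ F) : D x ≤ G.fire F D x := by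
  rw [fire_apply_of_notMem hx]
  exact le_add_of_nonneg_right (sum_nonneg fun _ _ => by positivity)

lemma lt_fire_apply_of_adj (hx : x ∈ F) (hy : y ∉ F) (hxy : G.Adj x y) :
    D y < G.fire F D y := by
  rw [fire_apply_of_notMem hy]
  refine lt_add_of_pos_right _ (sum_pos' (fun _ _ => by positivity) ⟨x, hx, ?_⟩)
  rw [G.symm]
  exact_mod_cast hxy

lemma Legal.effective_fire (hF : G.Legal F D) (hD : Effective D) : Effective (G.fire F D) := by
  intro x
  by_cases hx : x ∈ F
  · rw [fire_apply_of_mem hx, sub_nonneg]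
    exact hF x hx
  · exact (hD x).trans (le_fire_apply_of_notMem hx)

lemma outdegree_le_laplacian {f : V → ℤ} (hF : ∀ u, u ∈ F ↔ f u = f x)
    (hx : ∀ u, f u ≤ f x) : G.outdegree F x ≤ G.laplacian f x := by
  calc G.outdegree F x ≤ ∑ u ∈ Fᶜ, (G.mult x u : ℤ) * (f x - f u) := by
        refine sum_le_sum fun u hu => le_mul_of_one_le_right (by positivity) ?_
        have hne : f u ≠ f x := (hF u).not.1 (mem_compl.1 hu)
        have := hx u
        lia
    _ ≤ G.laplacian f x :=
        sum_le_sum_of_subset_of_nonneg (subset_univ _) fun u _ _ =>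
          mul_nonneg (by positivity) (sub_nonneg.2 (hx u))

-- The set on which a firing script towards an effective divisor is maximal can be fired first.
lemma exists_legal_of_winnable_sub {C : V → ℤ} (hC : Effective C) (hlt : D x < C x)
    (hwin : G.Winnable (D - C)) : ∃ F : Finset V, F.Nonempty ∧ x ∉ F ∧ G.Legal F D := by
  obtain ⟨E, hE, f, rfl⟩ := hwin
  obtain ⟨a, -, ha⟩ := exists_max_image univ f ⟨x, mem_univ x⟩
  let F : Finset V := {u | f u = f a}
  have hbound : ∀ y ∈ F, G.outdegree F y ≤ D y - C y := by
    intro y hy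
    have hy : f y = f a := by simpa [F] using hy
    have hlap : G.outdegree F y ≤ G.laplacian f y :=
      outdegree_le_laplacian (by simp [F, hy]) fun u => hy ▸ ha u (mem_univ u)
    have hEy : 0 ≤ D y - C y - G.laplacian f y := hE y
    lia
  refine ⟨F, ⟨a, by simp [F]⟩, fun hx => ?_, fun y hy => ?_⟩
  · have hout : 0 ≤ G.outdegree F x := sum_nonneg fun _ _ => by positivity
    have := hbound x hx
    lia
  · exact (hbound y hy).trans (sub_le_self _ (hC y))

end Firing

section Side

/-- The component of `u` in `G` with the vertex `w` removed (meaningful for `u ≠ w`). -/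
noncomputable def side (G : Multigraph V) (w u : V) : Finset V :=
  open Classical in {x | ¬ G.SeparatedBy w u x}

variable {G : Multigraph V} {F : Finset V} {D : V → ℤ} {u w x y : V}

lemma mem_side :
    x ∈ G.side w u ↔ Relation.ReflTransGen (fun x y => G.Adj x y ∧ x ≠ w ∧ y ≠ w) u x := by
  classical simp [side, SeparatedBy]

lemma mem_side_self : u ∈ G.side w u :=
  mem_side.2 .refl

lemma notMem_side (huw : u ≠ w) : w ∉ G.side w u := by
  intro h
  rcases (mem_side.1 h).cases_tail with rfl | ⟨_, -, -, -, hw⟩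
  · exact huw rfl
  · exact hw rfl

lemma mem_side_of_adj (huw : u ≠ w) (hx : x ∈ G.side w u) (hxy : G.Adj x y) (hy : y ≠ w) :
    y ∈ G.side w u := by
  have hxw : x ≠ w := ne_of_mem_of_not_mem hx (notMem_side huw)
  exact mem_side.2 ((mem_side.1 hx).tail ⟨hxy, hxw, hy⟩)

lemma side_subset (hu : u ∈ F) (hF : ∀ x ∈ F, ∀ y ∉ F, G.Adj x y → y = w) :
    G.side w u ⊆ F := by
  intro x hx
  replace hx := mem_side.1 hx
  induction hx with
  | refl => exact hu
  | @tail x y _ hxy ih =>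
    by_contra hy
    exact hxy.2.2 (hF x ih y hy hxy.1)

lemma outdegree_side (huw : u ≠ w) (hx : x ∈ G.side w u) :
    G.outdegree (G.side w u) x = G.mult x w := by
  refine sum_eq_single_of_mem w (mem_compl.2 (notMem_side huw)) fun y hy hyw => ?_
  by_contra hxy
  exact mem_compl.1 hy (mem_side_of_adj huw hx (by unfold Adj; lia) hyw)

lemma Legal.side (hF : G.Legal F D) (hw : w ∉ F) (huw : u ≠ w) (hsub : G.side w u ⊆ F) :
    G.Legal (G.side w u) D := by
  intro x hx
  rw [outdegree_side huw hx]
  exact (mult_le_outdegree hw).trans (hF x (hsub hx))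

lemma fire_side_apply (huw : u ≠ w) (hx : x ∈ G.side w u) :
    G.fire (G.side w u) D x = D x - G.mult x w := by
  rw [fire_apply_of_mem hx, outdegree_side huw hx]

lemma fire_side_apply_of_notMem (huw : u ≠ w) (hx : x ∉ G.side w u) (hxw : x ≠ w) :
    G.fire (G.side w u) D x = D x := by
  rw [fire_apply_of_notMem hx, sum_eq_zero, add_zero]
  intro y hy
  by_contra hxy
  exact hx (mem_side_of_adj huw hy (by unfold Adj; rw [G.symm]; lia) hxw)

end Side

section Level

/-- The simple graph underlying a multigraph, through which Mathlib's distance is available. -/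
def toSimpleGraph (G : Multigraph V) : SimpleGraph V where
  Adj := G.Adj
  symm := ⟨fun u v h => by rwa [Adj, G.symm]⟩
  loopless := ⟨fun v h => h.ne' (G.loopless v)⟩

/-- The distance from the root `v` in `G`; in the graph `QB_m(N)` with root `u_{0,1}` the
vertex `u_{i,j}` has level `i`. -/
noncomputable def level (G : Multigraph V) (v x : V) : ℕ := G.toSimpleGraph.dist v x

/-- The vertices of level at most `n`. -/
noncomputable def ball (G : Multigraph V) (v : V) (n : ℕ) : Finset V := {x | G.level v x ≤ n}

variable {G : Multigraph V} {v x y : V} {n : ℕ}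

lemma Adj.symm (h : G.Adj x y) : G.Adj y x :=
  G.toSimpleGraph.symm.symm _ _ h

lemma mem_ball : x ∈ G.ball v n ↔ G.level v x ≤ n := by
  simp [ball]

lemma level_self : G.level v v = 0 :=
  SimpleGraph.dist_self

lemma Connected.toSimpleGraph (hG : G.Connected) : G.toSimpleGraph.Connected where
  preconnected u v := (SimpleGraph.reachable_iff_reflTransGen u v).2 (hG.2 u v)
  nonempty := hG.1

lemma level_eq_zero (hG : G.Connected) : G.level v x = 0 ↔ x = v :=
  hG.toSimpleGraph.dist_eq_zero_iff.trans eq_comm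

lemma ne_of_level_lt (h : G.level v x < G.level v y) : x ≠ y :=
  fun hxy => h.ne (congrArg _ hxy)

lemma Adj.level_le (h : G.Adj x y) : G.level v y ≤ G.level v x + 1 := by
  have := SimpleGraph.Adj.diff_dist_adj (G := G.toSimpleGraph) (u := v) (v := x) (w := y) h
  unfold level
  lia

lemma exists_adj_level_add_one_eq (hG : G.Connected) (hx : x ≠ v) :
    ∃ y, G.Adj y x ∧ G.level v y + 1 = G.level v x := by
  obtain ⟨p, hp⟩ := hG.toSimpleGraph.exists_walk_length_eq_dist x v
  cases p with
  | nil => exact absurd rfl hx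
  | @cons _ y _ hxy p =>
    rw [SimpleGraph.Walk.length_cons, SimpleGraph.dist_comm] at hp
    have hyv : G.level v y ≤ p.length := by
      rw [level, SimpleGraph.dist_comm]
      exact SimpleGraph.dist_le p
    have hle : G.level v x ≤ G.level v y + 1 := Adj.level_le (Adj.symm hxy)
    exact ⟨y, Adj.symm hxy, by unfold level at *; lia⟩

lemma exists_adj_of_mem_of_notMem (hG : G.Connected) {F : Finset V} {a b : V}
    (ha : a ∈ F) (hb : b ∉ F) (han : G.level v a ≤ n) (hbn : G.level v b ≤ n) :
    ∃ x ∈ F, ∃ y ∉ F, G.Adj x y ∧ G.level v x ≤ n ∧ G.level v y ≤ n := by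
  by_contra! hcut
  have hiff : ∀ k ≤ n, ∀ x, G.level v x = k → (x ∈ F ↔ v ∈ F) := by
    intro k
    induction k with
    | zero => exact fun _ x hx => by rw [(level_eq_zero hG).1 hx]
    | succ k ih =>
      intro hk x hx
      have hxv : x ≠ v := fun h => by simp [h, level_self] at hx
      obtain ⟨y, hyx, hy⟩ := exists_adj_level_add_one_eq hG hxv
      rw [← ih (by lia) y (by lia)]
      by_contra hne
      rcases (by tauto : x ∈ F ∧ y ∉ F ∨ y ∈ F ∧ x ∉ F) with ⟨hxF, hyF⟩ | ⟨hyF, hxF⟩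
      · exact (hcut x hxF y hyF hyx.symm (by lia)).not_ge (by lia)
      · exact (hcut y hyF x hxF hyx (by lia)).not_ge (by lia)
  exact hb ((hiff _ hbn b rfl).2 ((hiff _ han a rfl).1 ha))

lemma exists_level_eq (hG : G.Connected) (h : n ≤ G.level v x) : ∃ y, G.level v y = n := by
  induction h using Nat.decreasingInduction with
  | self => exact ⟨x, rfl⟩
  | of_succ k _ ih =>
    obtain ⟨y, hy⟩ := ih
    obtain ⟨z, -, hz⟩ := exists_adj_level_add_one_eq hG (v := v) (x := y)
      fun h => by simp [h, level_self] at hy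
    exact ⟨z, by lia⟩

end Level

section Concentrated

/-- The divisor `D_u` with one chip on every vertex farther from the root `v` than `u` and all
other chips on `u`, so that `D_v` is `v + ∑ w`. -/
noncomputable def concentrated (G : Multigraph V) (v u : V) : V → ℤ := fun x =>
  if x = u then #(G.ball v (G.level v u)) + 1 else if G.level v x ≤ G.level v u then 0 else 1

variable {G : Multigraph V} {v u x : V}

lemma concentrated_self : G.concentrated v u u = #(G.ball v (G.level v u)) + 1 :=
  if_pos rfl

lemma concentrated_of_level_le (hxu : x ≠ u) (h : G.level v x ≤ G.level v u) :
    G.concentrated v u x = 0 := by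
  simp [concentrated, hxu, h]

lemma concentrated_of_level_lt (h : G.level v u < G.level v x) : G.concentrated v u x = 1 := by
  simp [concentrated, (ne_of_level_lt h).symm, h]

lemma two_le_concentrated_self : 2 ≤ G.concentrated v u u := by
  have hcard : 0 < #(G.ball v (G.level v u)) := card_pos.2 ⟨u, mem_ball.2 le_rfl⟩
  rw [concentrated_self]
  lia

lemma effective_concentrated : Effective (G.concentrated v u) := by
  intro x
  unfold concentrated
  split_ifs <;> positivity

lemma degree_concentrated : degree (G.concentrated v u) = Fintype.card V + 1 := by
  have hsplit : G.concentrated v u =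
      Pi.single u (#(G.ball v (G.level v u)) + 1 : ℤ) +
        fun x => if x ∈ (G.ball v (G.level v u))ᶜ then 1 else 0 := by
    funext x
    rcases eq_or_ne x u with rfl | hxu
    · simp [concentrated, mem_ball]
    · by_cases hle : G.level v x ≤ G.level v u <;> simp [concentrated, mem_ball, hxu, hle]
  have hcard := card_add_card_compl (G.ball v (G.level v u))
  rw [hsplit, degree_add, degree_single, degree, Fintype.sum_ite_mem, sum_const, nsmul_one]
  lia

lemma concentrated_root (hG : G.Connected) :
    G.concentrated v v = fun w => (if w = v then 1 else 0) + 1 := by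
  have hball : G.ball v 0 = {v} := by
    ext x
    simp [mem_ball, level_eq_zero hG]
  funext x
  simp only [concentrated, level_self, hball, card_singleton, Nat.le_zero, level_eq_zero hG]
  split_ifs <;> simp

lemma one_le_concentrated_root (hG : G.Connected) (x : V) : 1 ≤ G.concentrated v v x := by
  rw [concentrated_root hG]
  dsimp only
  split_ifs <;> simp

end Concentrated

/-- The hypotheses of the theorem on `G` and its root `v`, with the gonalities replaced by what the
argument uses of them. -/
structure IsTightRoot (G : Multigraph V) (v : V) : Prop where
  connected : G.Connected
  isTightRankTwo : G.IsTightRankTwo (G.concentrated v v)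

/-- The divisors `D_y` with `y` of level at most `n` are all equivalent to `D_v`: the induction
hypothesis under which the edges at level `n` are determined. -/
def Concentrates (G : Multigraph V) (v : V) (n : ℕ) : Prop :=
  ∀ ⦃y⦄, G.level v y ≤ n → G.LinEquiv (G.concentrated v v) (G.concentrated v y)

section TightRoot

variable {G : Multigraph V} {v u w x y z s : V} {F : Finset V}

lemma IsTightRoot.not_winnable_swap (h : G.IsTightRoot v) (hyz : y ≠ z)
    (hy : G.Winnable (G.concentrated v v - (Pi.single y 2 + Pi.single z 1))) :
    ¬ G.Winnable (G.concentrated v v - (Pi.single z 2 + Pi.single y 1)) :=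
  h.isTightRankTwo.not_winnable_swap (one_le_concentrated_root h.connected) hyz hy

lemma IsTightRoot.reduced (h : G.IsTightRoot v) : G.Reduced v (G.concentrated v v) := by
  refine ⟨fun w _ => effective_concentrated w, fun F hF hv => ?_⟩
  by_contra! hlegal
  replace hlegal : G.Legal F (G.concentrated v v) := fun x hx => sub_nonneg.1 (hlegal x hx)
  have hE := hlegal.effective_fire effective_concentrated
  have hpos := one_le_concentrated_root (v := v) h.connected
  have htwo := two_le_concentrated_self (G := G) (v := v) (u := v)
  obtain ⟨a, ha⟩ := hF
  obtain ⟨x, hx, y, hy, hxy, -⟩ := exists_adj_of_mem_of_notMem h.connected ha hv le_rfl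
    (level_self.trans_le (Nat.zero_le (G.level v a)))
  have hlt := lt_fire_apply_of_adj (D := G.concentrated v v) hx hy hxy
  rcases eq_or_ne y v with rfl | hyv
  · refine h.isTightRankTwo.not_winnable_sub_single_three hpos htwo
      (linEquiv_fire.winnable_sub_of_le (E := G.fire F _) fun w => ?_)
    rcases eq_or_ne w y with rfl | hwy
    · rw [Pi.single_eq_same]
      lia
    · simpa [hwy] using hE w
  · refine h.not_winnable_swap hyv.symm ?_ (linEquiv_fire.winnable_sub_of_le
      (hE.single_add_single_le hyv ?_ ((hpos v).trans (le_fire_apply_of_notMem hv))))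
    · exact (LinEquiv.refl G _).winnable_sub_of_le
        (effective_concentrated.single_add_single_le hyv.symm htwo (hpos y))
    · have := hpos y
      lia

lemma IsTightRoot.not_winnable_of_level_lt (h : G.IsTightRoot v)
    (hy : G.LinEquiv (G.concentrated v v) (G.concentrated v y))
    (hyw : G.level v y < G.level v w) :
    ¬ G.Winnable (G.concentrated v v - (Pi.single w 2 + Pi.single y 1)) := by
  have hne := ne_of_level_lt hyw
  exact h.not_winnable_swap hne (hy.winnable_sub_of_le (effective_concentrated.single_add_single_le
    hne two_le_concentrated_self (concentrated_of_level_lt hyw).ge))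

lemma IsTightRoot.exists_legal (h : G.IsTightRoot v)
    (hu : G.LinEquiv (G.concentrated v v) (G.concentrated v u))
    (huw : G.level v u < G.level v w) :
    ∃ F, G.Legal F (G.concentrated v u) ∧ u ∈ F ∧ w ∉ F := by
  obtain ⟨F, ⟨a, ha⟩, hw, hF⟩ := exists_legal_of_winnable_sub
    (D := G.concentrated v u) (effective_single w zero_le_two)
    (by rw [concentrated_of_level_lt huw, Pi.single_eq_same]; exact one_lt_two)
    ((hu.sub_right _).symm.winnable (h.isTightRankTwo.winnable_sub_single_two w))
  refine ⟨F, hF, ?_, hw⟩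
  by_contra hu'
  by_cases hball : ∃ a ∈ F, G.level v a ≤ G.level v u
  · obtain ⟨a, ha, hau⟩ := hball
    obtain ⟨x, hx, y, hy, hxy, hxu, -⟩ :=
      exists_adj_of_mem_of_notMem h.connected ha hu' hau le_rfl
    have hzero := concentrated_of_level_le (ne_of_mem_of_not_mem hx hu') hxu
    have hmult := (mult_le_outdegree hy).trans (hF x hx)
    unfold Adj at hxy
    lia
  · push Not at hball
    have hv : v ∉ F := fun hv => by simpa [level_self] using hball v hv
    obtain ⟨x, hx, hlt⟩ := h.reduced.2 F ⟨a, ha⟩ hv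
    have hone := (hF x hx).trans_eq (concentrated_of_level_lt (hball x hx))
    exact (sub_neg.1 hlt).not_ge (hone.trans (one_le_concentrated_root h.connected x))

lemma IsTightRoot.side_subset_of_legal (h : G.IsTightRoot v)
    (hc : G.Concentrates v (G.level v u)) (hF : G.Legal F (G.concentrated v u)) (hu : u ∈ F)
    (hz : z ∉ F) (huz : G.level v u < G.level v z) (hx : x ∈ F) (hxz : G.Adj x z) :
    G.side z u ⊆ F := by
  refine side_subset hu fun a ha y hy hay => ?_
  by_contra hyz
  have hE := hF.effective_fire effective_concentrated
  have hDE := (hc le_rfl).trans (linEquiv_fire (F := F))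
  have htwo := lt_fire_apply_of_adj (D := G.concentrated v u) hx hz hxz
  rw [concentrated_of_level_lt huz] at htwo
  have hone := lt_fire_apply_of_adj (D := G.concentrated v u) ha hy hay
  have hwin : G.Winnable (G.concentrated v v - (Pi.single z 2 + Pi.single y 1)) :=
    hDE.winnable_sub_of_le (hE.single_add_single_le (Ne.symm hyz) htwo
      ((effective_concentrated y).trans_lt hone))
  rcases le_or_gt (G.level v y) (G.level v u) with hyu | huy
  · exact h.not_winnable_of_level_lt (hc hyu) (hyu.trans_lt huz) hwin
  · rw [concentrated_of_level_lt huy] at hone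
    exact h.not_winnable_swap (Ne.symm hyz) hwin (hDE.winnable_sub_of_le
      (hE.single_add_single_le hyz hone (one_le_two.trans htwo)))

lemma IsTightRoot.legal_side (h : G.IsTightRoot v) (hc : G.Concentrates v (G.level v u))
    (huw : G.Adj u w) (hlt : G.level v u < G.level v w) :
    G.Legal (G.side w u) (G.concentrated v u) := by
  obtain ⟨F, hF, hu, hw⟩ := h.exists_legal (hc le_rfl) hlt
  exact hF.side hw (ne_of_mem_of_not_mem hu hw) (h.side_subset_of_legal hc hF hu hw hlt hu huw)

lemma IsTightRoot.mult_eq_of_legal_side (h : G.IsTightRoot v)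
    (hu : G.LinEquiv (G.concentrated v v) (G.concentrated v u))
    (hside : G.Legal (G.side z u) (G.concentrated v u)) (huz : G.level v u < G.level v z)
    (hx : x ∈ G.side z u) (hxz : G.Adj x z) :
    G.mult u z = #(G.ball v (G.level v u)) + 1 := by
  have hne := ne_of_level_lt huz
  have hle := hside u mem_side_self
  rw [outdegree_side hne mem_side_self, concentrated_self] at hle
  by_contra hmult
  have hone : 1 ≤ G.fire (G.side z u) (G.concentrated v u) u := by
    rw [fire_side_apply hne mem_side_self, concentrated_self]
    lia
  have htwo := lt_fire_apply_of_adj (D := G.concentrated v u) hx (notMem_side hne) hxz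
  rw [concentrated_of_level_lt huz] at htwo
  exact h.not_winnable_of_level_lt hu huz ((hu.trans linEquiv_fire).winnable_sub_of_le
    ((hside.effective_fire effective_concentrated).single_add_single_le hne.symm htwo hone))

lemma IsTightRoot.mult_eq_of_adj (h : G.IsTightRoot v) (hc : G.Concentrates v (G.level v u))
    (huw : G.Adj u w) (hlt : G.level v u < G.level v w) :
    G.mult u w = #(G.ball v (G.level v u)) + 1 :=
  h.mult_eq_of_legal_side (hc le_rfl) (h.legal_side hc huw hlt) hlt mem_side_self huw

lemma mem_side_of_level_le (hG : G.Connected) (huz : G.level v u < G.level v z)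
    (hx : G.level v x ≤ G.level v u) : x ∈ G.side z u := by
  by_contra hx'
  have hne := ne_of_level_lt huz
  obtain ⟨a, ha, b, hb, hab, -, hbu⟩ :=
    exists_adj_of_mem_of_notMem hG mem_side_self hx' le_rfl hx
  exact hb (mem_side_of_adj hne ha hab fun h => (h ▸ hbu).not_gt huz)

lemma IsTightRoot.mult_eq_zero_of_ne (h : G.IsTightRoot v) (hc : G.Concentrates v (G.level v u))
    (huw : G.Adj u w) (hlt : G.level v u < G.level v w) (hsu : s ≠ u)
    (hs : G.level v s ≤ G.level v u) : G.mult s w = 0 := by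
  have hne := ne_of_level_lt hlt
  have hmem := mem_side_of_level_le h.connected hlt hs
  have hle := h.legal_side hc huw hlt s hmem
  rw [outdegree_side hne hmem, concentrated_of_level_le hsu hs] at hle
  lia

lemma IsTightRoot.mult_le_one (h : G.IsTightRoot v) (hc : G.Concentrates v (G.level v u))
    (huw : G.Adj u w) (hlt : G.level v u < G.level v w) (hx : x ∈ G.side w u)
    (hux : G.level v u < G.level v x) : G.mult x w ≤ 1 := by
  have hne := ne_of_level_lt hlt
  have hle := h.legal_side hc huw hlt x hx
  rw [outdegree_side hne hx, concentrated_of_level_lt hux] at hle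
  exact_mod_cast hle

lemma IsTightRoot.winnable_of_mult_eq_zero (h : G.IsTightRoot v)
    (hc : G.Concentrates v (G.level v u)) (huw : G.Adj u w) (hlt : G.level v u < G.level v w)
    (hx : x ∈ G.side w u) (hux : G.level v u < G.level v x) (hxw : G.mult x w = 0) :
    G.Winnable (G.concentrated v v - (Pi.single w 2 + Pi.single x 1)) := by
  have hne := ne_of_level_lt hlt
  have htwo := lt_fire_apply_of_adj (D := G.concentrated v u)
    (F := G.side w u) mem_side_self (notMem_side hne) huw
  rw [concentrated_of_level_lt hlt] at htwo
  have hone : G.fire (G.side w u) (G.concentrated v u) x = 1 := by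
    rw [fire_side_apply hne hx, concentrated_of_level_lt hux, hxw, Nat.cast_zero, sub_zero]
  have hE := (h.legal_side hc huw hlt).effective_fire effective_concentrated
  exact ((hc le_rfl).trans linEquiv_fire).winnable_sub_of_le
    (hE.single_add_single_le (ne_of_mem_of_not_mem hx (notMem_side hne)).symm htwo hone.ge)

lemma IsTightRoot.mult_eq_one_of_adj (h : G.IsTightRoot v) (hc : G.Concentrates v (G.level v u))
    (huw : G.Adj u w) (hw : G.level v u < G.level v w) (hux : G.Adj u x)
    (hx : G.level v u < G.level v x) (hxw : x ≠ w) : G.mult x w = 1 := by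
  have hnew := ne_of_level_lt hw
  have hnex := ne_of_level_lt hx
  have hxmem : x ∈ G.side w u := mem_side_of_adj hnew mem_side_self hux hxw
  have hwmem : w ∈ G.side x u := mem_side_of_adj hnex mem_side_self huw hxw.symm
  have hle := h.mult_le_one hc huw hw hxmem hx
  by_contra hne
  have hzero : G.mult x w = 0 := by lia
  exact h.not_winnable_swap hxw.symm (h.winnable_of_mult_eq_zero hc huw hw hxmem hx hzero)
    (h.winnable_of_mult_eq_zero hc hux hx hwmem hw (G.symm w x ▸ hzero))

lemma IsTightRoot.mult_eq_zero_of_not_adj (h : G.IsTightRoot v)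
    (hc : G.Concentrates v (G.level v u)) (huw : G.Adj u w) (hw : G.level v u < G.level v w)
    (hxs : x ∈ G.side w u) (hx : G.level v u < G.level v x) (hux : ¬ G.Adj u x) :
    G.mult x w = 0 := by
  by_contra hxw
  have hwx : G.Adj w x := Adj.symm (Nat.pos_of_ne_zero hxw)
  obtain ⟨F, hF, hu, hxF⟩ := h.exists_legal (hc le_rfl) hx
  by_cases hwF : w ∈ F
  · have hne : u ≠ x := ne_of_mem_of_not_mem hu hxF
    have hside := hF.side hxF hne (h.side_subset_of_legal hc hF hu hxF hx hwF hwx)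
    have hwmem : w ∈ G.side x u :=
      mem_side_of_adj hne mem_side_self huw (ne_of_mem_of_not_mem hwF hxF)
    have hmult := h.mult_eq_of_legal_side (hc le_rfl) hside hx hwmem hwx
    exact hux (show 0 < G.mult u x by lia)
  · exact hxF (h.side_subset_of_legal hc hF hu hwF hw hu huw hxs)

lemma IsTightRoot.eq_of_adj_of_adj (h : G.IsTightRoot v) (hc : G.Concentrates v (G.level v u))
    (huw : G.Adj u w) (hw : G.level v u < G.level v w) (hs : G.level v s = G.level v u)
    (hsx : G.Adj s x) (hx : G.level v s < G.level v x) : s = u := by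
  by_contra hsu
  have hcs : G.Concentrates v (G.level v s) := hs ▸ hc
  have hsw := h.mult_eq_zero_of_ne hc huw hw hsu hs.le
  have hux : ¬ G.Adj u x := (h.mult_eq_zero_of_ne hcs hsx hx (Ne.symm hsu) hs.ge).not_gt
  have hxw : x ≠ w := by rintro rfl; exact hsx.ne' hsw
  have hnew := ne_of_level_lt hw
  have hnex := ne_of_level_lt hx
  have hxmem : x ∈ G.side w u :=
    mem_side_of_adj hnew (mem_side_of_level_le h.connected hw hs.le) hsx hxw
  have hwmem : w ∈ G.side x s :=
    mem_side_of_adj hnex (mem_side_of_level_le h.connected hx hs.ge) huw hxw.symm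
  have hzero := h.mult_eq_zero_of_not_adj hc huw hw hxmem (hs ▸ hx) hux
  exact h.not_winnable_swap hxw.symm
    (h.winnable_of_mult_eq_zero hc huw hw hxmem (hs ▸ hx) hzero)
    (h.winnable_of_mult_eq_zero hcs hsx hx hwmem (hs ▸ hw) (G.symm w x ▸ hzero))

lemma IsTightRoot.adj_of_level_eq (h : G.IsTightRoot v) (hc : G.Concentrates v (G.level v u))
    (huw : G.Adj u w) (hw : G.level v u < G.level v w) (hx : G.level v x = G.level v u + 1) :
    G.Adj u x := by
  have hxv : x ≠ v := by rintro rfl; simp [level_self] at hx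
  obtain ⟨s, hsx, hs⟩ := exists_adj_level_add_one_eq h.connected hxv
  rwa [← h.eq_of_adj_of_adj hc huw hw (by lia) hsx (by lia)]

lemma IsTightRoot.fire_side_eq_concentrated (h : G.IsTightRoot v)
    (hc : G.Concentrates v (G.level v u)) (huw : G.Adj u w)
    (hw : G.level v w = G.level v u + 1) :
    G.fire (G.side w u) (G.concentrated v u) = G.concentrated v w := by
  have hlt : G.level v u < G.level v w := by lia
  have hne := ne_of_level_lt hlt
  refine eq_of_degree_eq_of_forall_ne (w := w) ?_ fun x hxw => ?_
  · rw [linEquiv_fire.degree_eq, degree_concentrated, degree_concentrated]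
  rcases lt_or_ge (G.level v u) (G.level v x) with hux | hxu
  · by_cases hx : x ∈ G.side w u
    · rw [fire_side_apply hne hx, concentrated_of_level_lt hux]
      rcases (Nat.succ_le_of_lt hux).eq_or_lt with heq | hgt
      · rw [h.mult_eq_one_of_adj hc huw hlt (h.adj_of_level_eq hc huw hlt heq.symm) hux hxw,
          concentrated_of_level_le hxw (by lia), Nat.cast_one, sub_self]
      · have hnadj : ¬ G.Adj u x := fun hadj => by
          have := Adj.level_le (v := v) hadj
          lia
        rw [h.mult_eq_zero_of_not_adj hc huw hlt hx hux hnadj, concentrated_of_level_lt (by lia),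
          Nat.cast_zero, sub_zero]
    · have hnadj : ¬ G.Adj u x := fun hadj => hx (mem_side_of_adj hne mem_side_self hadj hxw)
      have hgt : G.level v w < G.level v x := by
        refine lt_of_le_of_ne (by lia) fun heq => hnadj ?_
        exact h.adj_of_level_eq hc huw hlt (by lia)
      rw [fire_side_apply_of_notMem hne hx hxw, concentrated_of_level_lt hux,
        concentrated_of_level_lt hgt]
  · rw [fire_side_apply hne (mem_side_of_level_le h.connected hlt hxu),
      concentrated_of_level_le hxw (by lia)]
    rcases eq_or_ne x u with rfl | hxne
    · rw [concentrated_self, h.mult_eq_of_adj hc huw hlt]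
      simp
    · rw [concentrated_of_level_le hxne hxu, h.mult_eq_zero_of_ne hc huw hlt hxne hxu]
      simp

lemma IsTightRoot.concentrates (h : G.IsTightRoot v) (n : ℕ) : G.Concentrates v n := by
  induction n with
  | zero =>
    intro y hy
    rw [(level_eq_zero h.connected).1 (Nat.le_zero.1 hy)]
    exact .refl G _
  | succ n ih =>
    intro y hy
    rcases hy.lt_or_eq with hlt | heq
    · exact ih (Nat.lt_succ_iff.1 hlt)
    have hyv : y ≠ v := by rintro rfl; simp [level_self] at heq
    obtain ⟨u, huy, hu⟩ := exists_adj_level_add_one_eq h.connected hyv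
    obtain rfl : G.level v u = n := by lia
    rw [← h.fire_side_eq_concentrated ih huy heq]
    exact (ih le_rfl).trans linEquiv_fire

lemma IsTightRoot.mult_eq_one (h : G.IsTightRoot v) (hxy : x ≠ y)
    (hlevel : G.level v x = G.level v y) : G.mult x y = 1 := by
  have hyv : y ≠ v := by
    rintro rfl
    exact hxy ((level_eq_zero h.connected).1 (hlevel.trans level_self))
  obtain ⟨c, hcy, hc⟩ := exists_adj_level_add_one_eq h.connected hyv
  have hcx := h.adj_of_level_eq (h.concentrates _) hcy (by lia) (hlevel.trans hc.symm)
  exact h.mult_eq_one_of_adj (h.concentrates _) hcy (by lia) hcx (by lia) hxy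

lemma IsTightRoot.exists_head (h : G.IsTightRoot v) {n : ℕ} (hn : ∃ x, G.level v x = n) :
    ∃ c, G.level v c = n ∧ ∀ x y, G.level v x = n → G.level v y = n + 1 →
      G.mult x y = if x = c then #(G.ball v n) + 1 else 0 := by
  by_cases hne : ∃ y, G.level v y = n + 1
  · obtain ⟨y₀, hy₀⟩ := hne
    obtain ⟨c, hcy₀, hc⟩ := exists_adj_level_add_one_eq h.connected (v := v) (x := y₀)
      (by rintro rfl; simp [level_self] at hy₀)
    obtain rfl : G.level v c = n := by lia
    have hconc := h.concentrates (G.level v c)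
    refine ⟨c, rfl, fun x y hx hy => ?_⟩
    have hcy := h.adj_of_level_eq hconc hcy₀ (by lia) hy
    split_ifs with hxc
    · rw [hxc, h.mult_eq_of_adj hconc hcy (by lia)]
    · exact h.mult_eq_zero_of_ne hconc hcy (by lia) hxc hx.le
  · obtain ⟨c, hc⟩ := hn
    exact ⟨c, hc, fun x y _ hy => absurd ⟨y, hy⟩ hne⟩

end TightRoot

section Labelling

/-- A quasi-banana structure on `G` with root `v`, without the numbering inside the levels:
`L x` is the level of `x`, and `c i` is the vertex `u_{i,1}`, the only one of level `i` with
neighbours of level `i + 1`. -/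
structure IsQBLevelling (G : Multigraph V) (v : V) (m : ℕ) (L : V → ℕ) (c : ℕ → V) : Prop where
  level_le (x : V) : L x ≤ m
  level_eq_zero (x : V) : L x = 0 ↔ x = v
  level_head (i : ℕ) : i ≤ m → L (c i) = i
  mult_eq (x y : V) : x ≠ y → L x ≤ L y → G.mult x y =
    if L x = L y then 1 else if L x + 1 = L y ∧ x = c (L x) then #{z | L z ≤ L x} + 1 else 0

variable {G : Multigraph V} {v : V} {m : ℕ} {L : V → ℕ} {c : ℕ → V}

lemma IsTightRoot.exists_isQBLevelling (h : G.IsTightRoot v) :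
    ∃ m c, G.IsQBLevelling v m (G.level v) c := by
  have : Nonempty V := ⟨v⟩
  obtain ⟨a, -, ha⟩ := exists_mem_eq_sup univ univ_nonempty (G.level v)
  choose! c hc hmult using fun n (hn : n ≤ G.level v a) =>
    h.exists_head (exists_level_eq h.connected hn)
  have hle : ∀ x, G.level v x ≤ G.level v a := fun x => ha ▸ le_sup (mem_univ x)
  refine ⟨G.level v a, c, hle, fun x => level_eq_zero h.connected, hc, fun x y hxy hlevel => ?_⟩
  split_ifs with heq hhead
  · exact h.mult_eq_one hxy heq
  · rw [hmult _ (hle x) x y rfl hhead.1.symm, if_pos hhead.2, ball]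
  · rcases (Nat.succ_le_of_lt (hlevel.lt_of_ne heq)).eq_or_lt with hsucc | hlt
    · rw [hmult _ (hle x) x y rfl hsucc.symm, if_neg fun hx => hhead ⟨hsucc, hx⟩]
    · by_contra hne
      have := Adj.level_le (v := v) (G := G) (x := x) (y := y) (Nat.pos_of_ne_zero hne)
      lia

lemma exists_bijOn_Icc_one_card {α : Type*} {A : Finset α} {a : α} (ha : a ∈ A) :
    ∃ f : α → ℕ, Set.BijOn f A (Set.Icc 1 #A) ∧ f a = 1 := by
  classical
  let e : A ≃ Fin #A := A.equivFin.setValue ⟨a, ha⟩ ⟨0, card_pos.2 ⟨a, ha⟩⟩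
  let f : α → ℕ := fun x => if hx : x ∈ A then e ⟨x, hx⟩ + 1 else 0
  have hf : ∀ x (hx : x ∈ A), f x = e ⟨x, hx⟩ + 1 := fun x hx => dif_pos hx
  refine ⟨f, ⟨fun x hx => ?_, fun x hx y hy hxy => ?_, fun n hn => ?_⟩, ?_⟩
  · have := (e ⟨x, hx⟩).isLt
    rw [hf x hx, Set.mem_Icc]
    lia
  · rw [hf x hx, hf y hy, Nat.add_right_cancel_iff, Fin.val_inj, e.injective.eq_iff] at hxy
    exact congrArg Subtype.val hxy
  · obtain ⟨x, hx⟩ := e.surjective ⟨n - 1, by rw [Set.mem_Icc] at hn; lia⟩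
    refine ⟨x, x.2, ?_⟩
    rw [hf x x.2, hx]
    exact Nat.sub_add_cancel hn.1
  · rw [hf a ha, Equiv.setValue_eq]

lemma IsQBLevelling.exists_numbering (h : G.IsQBLevelling v m L c) :
    ∃ p : V → ℕ, (∀ i ≤ m, Set.BijOn p {x | L x = i} (Set.Icc 1 #{x | L x = i})) ∧
      ∀ x, p x = 1 ↔ x = c (L x) := by
  choose! f hf hfc using fun i (hi : i ≤ m) =>
    exists_bijOn_Icc_one_card (A := {x | L x = i}) (a := c i) (by simpa using h.level_head i hi)
  simp only [coe_filter_univ] at hf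
  refine ⟨fun x => f (L x) x, fun i hi => (hf i hi).congr fun x hx => by rw [hx], fun x => ?_⟩
  have hx := h.level_le x
  rw [← hfc (L x) hx]
  exact (hf (L x) hx).injOn.eq_iff rfl (h.level_head (L x) hx)

lemma IsQBLevelling.card_level_eq_zero (h : G.IsQBLevelling v m L c) : #{x | L x = 0} = 1 :=
  card_eq_one.2 ⟨v, by ext x; simp [h.level_eq_zero]⟩

lemma IsQBLevelling.qbSize_eq (h : G.IsQBLevelling v m L c) (i : ℕ) :
    qbSize (fun i => #{x | L x = i}) i = #{x | L x = i} := by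
  unfold qbSize
  split_ifs with hi
  · rw [hi, h.card_level_eq_zero]
  · rfl

lemma IsQBLevelling.card_level_le (h : G.IsQBLevelling v m L c) (n : ℕ) :
    #{x | L x ≤ n} = ∑ i ∈ Icc 1 n, #{x | L x = i} + 1 := by
  induction n with
  | zero => simpa using h.card_level_eq_zero
  | succ n ih =>
    have hdisj : Disjoint ({x | L x ≤ n} : Finset V) ({x | L x = n + 1} : Finset V) :=
      disjoint_filter.2 fun x _ hx => by lia
    rw [sum_Icc_succ_top (by lia), add_right_comm, ← ih, ← card_union_of_disjoint hdisj,
      ← filter_or]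
    simp only [Nat.le_succ_iff]

lemma IsQBLevelling.exists_isQBLabelling (h : G.IsQBLevelling v m L c) :
    ∃ (q : ℕ → ℕ) (ℓ : V → ℕ × ℕ), G.IsQBLabelling m q ℓ ∧ ℓ v = (0, 1) := by
  obtain ⟨p, hp, hhead⟩ := h.exists_numbering
  have hv : L v = 0 := (h.level_eq_zero v).2 rfl
  have hroot : v = c (L v) := by
    rw [hv]
    exact ((h.level_eq_zero _).1 (h.level_head 0 (Nat.zero_le m))).symm
  refine ⟨fun i => #{x | L x = i}, fun x => (L x, p x), ⟨fun i _ hi => ?_, fun x y hxy => ?_,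
    fun x => ⟨h.level_le x, ?_⟩, fun i j hi hj hij => ?_, fun x y hxy => ?_⟩,
    Prod.ext hv ((hhead v).2 hroot)⟩
  · exact card_pos.2 ⟨c i, by simpa using h.level_head i hi⟩
  · obtain ⟨hL, hpxy⟩ := Prod.ext_iff.1 hxy
    exact (hp _ (h.level_le x)).injOn rfl hL.symm hpxy
  · rw [h.qbSize_eq]
    exact (hp _ (h.level_le x)).mapsTo rfl
  · rw [h.qbSize_eq] at hij
    obtain ⟨x, hx, rfl⟩ := (hp i hi).surjOn ⟨hj, hij⟩
    exact ⟨x, Prod.ext hx rfl⟩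
  · simp only [hhead]
    rcases le_total (L x) (L y) with hle | hle
    · rw [h.mult_eq x y hxy hle, h.card_level_le]
      grind
    · rw [G.symm, h.mult_eq y x hxy.symm hle, h.card_level_le]
      grind

end Labelling

end Multigraph

/-- If `G` is a gonality-tight graph with a vertex `v` such that the
divisor `v + ∑_{w ∈ V(G)} w` realises the second gonality, then `G` is a quasi-banana graph
with `v` as the vertex `u_{0,1}`. -/
theorem stmt10 (G : Multigraph V) (hG : G.Connected) (hGT : G.GonalityTight)
    (v : V) (hreal : G.Realises 2 (fun w => (if w = v then 1 else 0) + 1)) :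
    ∃ (m : ℕ) (q : ℕ → ℕ) (ℓ : V → ℕ × ℕ),
      G.IsQBLabelling m q ℓ ∧ ℓ v = (0, 1) := by
  have := hG.1
  rw [← Multigraph.concentrated_root hG] at hreal
  have hroot : G.IsTightRoot v := ⟨hG, hGT.isTightRankTwo hreal⟩
  obtain ⟨m, c, hlevelling⟩ := hroot.exists_isQBLevelling
  obtain ⟨q, ℓ, hℓ⟩ := hlevelling.exists_isQBLabelling
  exact ⟨m, q, ℓ, hℓ⟩
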